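/- Let $f:\mathbb{D}\to\mathbb{D}$ be an injective holomorphic map with $f(0)=0$ and let $w\in\mathbb{D}\setminus\{0\}$. Then $\frac{|f(w)|}{(1-|f(w)|)^2} \leq |f'(0)|\,\frac{|w|}{(1-|w|)^2}$ (upper Pick growth bound for bounded univalent functions). -/

import Mathlib

open Complex Metric

/-!
Compose `f` with the rotated Koebe function `z ↦ z / (1 - α z) ^ 2`, where `α f(w) = |f(w)|`: the
composition is univalent on the unit disk, has derivative `f'(0)` at `0` and takes at `w` a value of
modulus `|f(w)| / (1 - |f(w)|) ^ 2`, so the bound is Koebe's growth theorem for the composition.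

The growth theorem integrates the distortion theorem, a differential inequality along radii obtained
by moving Bieberbach's inequality `|g''(0)| ≤ 4 |g'(0)|` to every point with disk automorphisms.
Bieberbach's inequality is `|P'(0)| ≤ 1` for an injective `G(z) = 1 / z + P(z)`, applied to a branch
of `√(A / (g(z²) - g(0)))`. For the latter, `G` maps the annulus `ρ < |z| < 1` inside the
near-ellipse `G(|z| = ρ)`, which a real-linear map takes to a near-circle; comparing areas as
`ρ → 0` gives the claim.
-/

open Filter MeasureTheory Set
open scoped ComplexConjugate Topology

/-! ### Injective holomorphic functions -/

theorem exists_analyticAt_pow_eq {h : ℂ → ℂ} {a : ℂ} (hh : AnalyticAt ℂ h a)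
    (ha : h a ≠ 0) {n : ℕ} (hn : n ≠ 0) :
    ∃ k : ℂ → ℂ, AnalyticAt ℂ k a ∧ k a ≠ 0 ∧ ∀ z, k z ^ n = h z := by
  refine ⟨fun z => (h z / h a) ^ (n⁻¹ : ℂ) * h a ^ (n⁻¹ : ℂ), ?_, ?_, fun z => ?_⟩
  · exact ((hh.div_const).cpow analyticAt_const (by simp [ha])).mul analyticAt_const
  · simp [ha]
  · simp [mul_pow, cpow_nat_inv_pow _ hn, div_mul_cancel₀ _ ha]

theorem exists_analyticAt_sub_eq_pow {f : ℂ → ℂ} {a : ℂ} (hf : AnalyticAt ℂ f a)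
    (hconst : ¬∀ᶠ z in 𝓝 a, f z = f a) :
    ∃ (n : ℕ) (φ : ℂ → ℂ), n ≠ 0 ∧ AnalyticAt ℂ φ a ∧ φ a = 0 ∧ deriv φ a ≠ 0 ∧
      ∀ᶠ z in 𝓝 a, f z - f a = φ z ^ n := by
  obtain ⟨n, h, hh, hha, hfh⟩ :=
    (hf.sub (analyticAt_const (v := f a))).exists_eventuallyEq_pow_smul_nonzero_iff.2 (by
      simpa [sub_eq_zero] using hconst)
  have hn : n ≠ 0 := by
    rintro rfl
    simpa [hha] using hfh.self_of_nhds.symm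
  obtain ⟨k, hk, hka, hkh⟩ := exists_analyticAt_pow_eq hh hha hn
  refine ⟨n, fun z => (z - a) * k z, hn, by fun_prop, by simp, ?_, ?_⟩
  · have : HasDerivAt (fun z => (z - a) * k z) (k a) a := by
      simpa using ((hasDerivAt_id' a).sub_const a).fun_mul hk.differentiableAt.hasDerivAt
    rwa [this.deriv]
  · filter_upwards [hfh] with z hz
    simpa [mul_pow, hkh] using hz

theorem deriv_ne_zero_of_injOn {f : ℂ → ℂ} {U : Set ℂ} (hf : DifferentiableOn ℂ f U)
    (hU : IsOpen U) (hinj : InjOn f U) {a : ℂ} (ha : a ∈ U) : deriv f a ≠ 0 := by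
  have hUa : U ∈ 𝓝 a := hU.mem_nhds ha
  have hfa : AnalyticAt ℂ f a := hf.analyticAt hUa
  have hnonconst : ¬∀ᶠ z in 𝓝 a, f z = f a := fun hconst => by
    obtain ⟨z, ⟨hz, hzU⟩, hza⟩ := (((hconst.and hUa).filter_mono
      nhdsWithin_le_nhds).and (self_mem_nhdsWithin (s := {a}ᶜ))).exists
    exact hza (hinj hzU ha hz)
  obtain ⟨n, φ, hn, hφ, hφ0, hφ', hfφ⟩ := exists_analyticAt_sub_eq_pow hfa hnonconst
  rcases eq_or_ne n 1 with rfl | hn1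
  · have hfφ' : f =ᶠ[𝓝 a] fun z => φ z + f a := hfφ.mono fun z hz => by
      beta_reduce
      rw [← pow_one (φ z), ← hz, sub_add_cancel]
    rwa [hfφ'.deriv_eq, deriv_add_const]
  obtain ⟨ζ, hζ⟩ : ∃ ζ : ℂ, IsPrimitiveRoot ζ n := ⟨_, isPrimitiveRoot_exp n hn⟩
  -- `φ` is onto a neighbourhood of `0`, so it takes both values `w` and `ζ * w`.
  have hφU : φ '' (U ∩ {z | f z - f a = φ z ^ n}) ∈ 𝓝 (0 : ℂ) := by
    rw [← hφ0, ← hφ.hasStrictDerivAt.map_nhds_eq hφ']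
    exact image_mem_map (inter_mem hUa hfφ)
  have hζU : ∀ᶠ w in 𝓝[≠] (0 : ℂ), ζ * w ∈ φ '' (U ∩ {z | f z - f a = φ z ^ n}) := by
    have : Tendsto (fun w => ζ * w) (𝓝 0) (𝓝 0) := by
      simpa using (continuous_const_mul ζ).tendsto 0
    exact nhdsWithin_le_nhds (this hφU)
  obtain ⟨w, ⟨⟨y, ⟨hyU, hy⟩, hyw⟩, ⟨x, ⟨hxU, hx⟩, hxw⟩⟩, hw⟩ :=
    ((hζU.and (nhdsWithin_le_nhds hφU)).and self_mem_nhdsWithin).exists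
  have hxy : f x = f y := by
    rw [← sub_left_inj (a := f a), hx, hy, hxw, hyw, mul_pow, hζ.pow_eq_one, one_mul]
  have hζw : ζ * w = 1 * w := by rw [← hyw, ← hinj hxU hyU hxy, hxw, one_mul]
  exact absurd (mul_right_cancel₀ hw hζw) (hζ.ne_one (by omega))

theorem isOpen_image_of_injOn {f : ℂ → ℂ} {U : Set ℂ} (hf : DifferentiableOn ℂ f U)
    (hU : IsOpen U) (hinj : InjOn f U) : IsOpen (f '' U) := by
  refine isOpen_iff_mem_nhds.2 (forall_mem_image.2 fun z hz => ?_)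
  have hUz : U ∈ 𝓝 z := hU.mem_nhds hz
  rw [← (hf.analyticAt hUz).hasStrictDerivAt.map_nhds_eq (deriv_ne_zero_of_injOn hf hU hinj hz)]
  exact image_mem_map hUz

theorem isPreconnected_compl_closedBall {E : Type*} [NormedAddCommGroup E] [NormedSpace ℝ E]
    (hE : 1 < Module.rank ℝ E) (x : E) {r : ℝ} (hr : 0 ≤ r) :
    IsPreconnected (closedBall x r)ᶜ := by
  have himage : (closedBall x r)ᶜ =
      (fun p : ℝ × E => x + p.1 • p.2) '' (Ioi r ×ˢ sphere (0 : E) 1) := by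
    ext y
    constructor
    · intro hy
      have hy : r < ‖y - x‖ := by simpa [dist_eq_norm] using hy
      have hy0 : ‖y - x‖ ≠ 0 := (hr.trans_lt hy).ne'
      exact ⟨(‖y - x‖, ‖y - x‖⁻¹ • (y - x)), ⟨hy, by simp [norm_smul, hy0]⟩, by
        simp [smul_smul, hy0]⟩
    · rintro ⟨⟨t, u⟩, ⟨ht, hu⟩, rfl⟩
      have ht : r < t := ht
      have hu : ‖u‖ = 1 := by simpa using hu
      simpa [dist_eq_norm, norm_smul, hu] using ht.trans_le (le_abs_self t)
  rw [himage]
  exact (isPreconnected_Ioi.prod (isPreconnected_sphere hE 0 1)).image _ (by fun_prop)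

theorem isClosed_image_diff_singleton_of_isCompact {X Y : Type*} [TopologicalSpace X]
    [TopologicalSpace Y] [T2Space Y] [WeaklyLocallyCompactSpace Y] {f : X → Y} {K : Set X} {c : X}
    (hK : IsCompact K) (hf : ContinuousOn f (K \ {c}))
    (hc : Tendsto f (𝓝[≠] c) (cocompact Y)) : IsClosed (f '' (K \ {c})) := by
  refine isClosed_of_closure_subset fun y hy => ?_
  obtain ⟨N, hN, hyN⟩ := exists_compact_mem_nhds y
  obtain ⟨W, hW, hcW, hWN⟩ := mem_nhdsWithin.1 (hc hN.compl_mem_cocompact)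
  have hKW : K \ W ⊆ K \ {c} := sdiff_subset_sdiff_right (singleton_subset_iff.2 hcW)
  have hclosed : IsClosed (f '' (K \ W)) :=
    ((hK.diff hW).image_of_continuousOn (hf.mono hKW)).isClosed
  have hsub : f '' (K \ {c}) ⊆ (interior N)ᶜ ∪ f '' (K \ W) := by
    rintro _ ⟨x, ⟨hxK, hxc⟩, rfl⟩
    by_cases hxW : x ∈ W
    · exact .inl fun hxN => hWN ⟨hxW, hxc⟩ (interior_subset hxN)
    · exact .inr ⟨x, ⟨hxK, hxW⟩, rfl⟩
  refine image_mono hKW ((closure_minimal hsub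
    (isOpen_interior.isClosed_compl.union hclosed) hy).resolve_left fun h => ?_)
  exact h (mem_interior_iff_mem_nhds.2 hyN)

theorem mapsTo_diff_closedBall_of_injOn_of_tendsto_cocompact {G : ℂ → ℂ} {U S : Set ℂ} {c : ℂ}
    {r : ℝ} (hG : DifferentiableOn ℂ G (U \ {c})) (hinj : InjOn G (U \ {c}))
    (hc : Tendsto G (𝓝[≠] c) (cocompact ℂ)) (hr : 0 < r) (hrU : closedBall c r ⊆ U)
    (hS : IsCompact S) (hS' : IsPreconnected Sᶜ) (hGS : MapsTo G (sphere c r) S) :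
    MapsTo G (U \ closedBall c r) S := by
  set V : Set ℂ := G '' (ball c r \ {c})
  have hclosedU : closedBall c r \ {c} ⊆ U \ {c} := sdiff_subset_sdiff_left hrU
  have hballU : ball c r \ {c} ⊆ U \ {c} :=
    (sdiff_subset_sdiff_left ball_subset_closedBall).trans hclosedU
  have hVopen : IsOpen V := isOpen_image_of_injOn (hG.mono hballU)
    (isOpen_ball.sdiff isClosed_singleton) (hinj.mono hballU)
  have hne : (Sᶜ ∩ V).Nonempty := by
    obtain ⟨z, ⟨hzS, hzr⟩, hzc⟩ := (((hc.eventually hS.compl_mem_cocompact).and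
      (nhdsWithin_le_nhds (ball_mem_nhds c hr))).and self_mem_nhdsWithin).exists
    exact ⟨G z, hzS, mem_image_of_mem G ⟨hzr, hzc⟩⟩
  have hclosure : closure V ∩ Sᶜ ⊆ V := by
    rintro u ⟨huV, huS⟩
    obtain ⟨z, ⟨hz, hzc⟩, rfl⟩ := closure_minimal
      (image_mono (sdiff_subset_sdiff_left ball_subset_closedBall))
      (isClosed_image_diff_singleton_of_isCompact (isCompact_closedBall c r)
        (hG.continuousOn.mono hclosedU) hc) huV
    rw [← ball_union_sphere] at hz
    exact mem_image_of_mem G ⟨hz.resolve_right fun h => huS (hGS h), hzc⟩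
  rintro z ⟨hzU, hzr⟩
  by_contra hzS
  obtain ⟨y, hy, hyz⟩ := hS'.subset_of_closure_inter_subset hVopen hne hclosure hzS
  have hzc : z ≠ c := fun h => hzr (h ▸ mem_closedBall_self hr.le)
  rw [hinj (hballU hy) ⟨hzU, hzc⟩ hyz] at hy
  exact hzr (ball_subset_closedBall hy.1)

/-! ### Circle averages and integrals over annuli -/

theorem circleAverage_norm_sq_eq_add {E : Type*} [NormedAddCommGroup E] [InnerProductSpace ℂ E]
    [CompleteSpace E] {F : ℂ → E} {c : ℂ} {R : ℝ} (hF : DiffContOnCl ℂ F (ball c |R|)) :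
    Real.circleAverage (fun z => ‖F z‖ ^ 2) c R =
      ‖F c‖ ^ 2 + Real.circleAverage (fun z => ‖F z - F c‖ ^ 2) c R := by
  have hFc : ContinuousOn (fun z => F z - F c) (sphere c |R|) :=
    (hF.continuousOn_ball.mono sphere_subset_closedBall).sub continuousOn_const
  have hsq : CircleIntegrable (fun z => ‖F z - F c‖ ^ 2) c R := (hFc.norm.pow 2).circleIntegrable'
  have hℓF : DiffContOnCl ℂ (fun z => inner ℂ (F c) (F z - F c)) (ball c |R|) :=
    (innerSL ℂ (F c)).differentiable.comp_diffContOnCl (hF.sub_const _)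
  have hℓ : CircleIntegrable (fun z => inner ℂ (F c) (F z - F c)) c R :=
    (continuousOn_const.inner hFc).circleIntegrable'
  have hre : CircleIntegrable (fun z => 2 * (inner ℂ (F c) (F z - F c)).re) c R :=
    (continuousOn_const.mul
      (continuous_re.comp_continuousOn (continuousOn_const.inner hFc))).circleIntegrable'
  have hzero : Real.circleAverage (fun z => 2 * (inner ℂ (F c) (F z - F c)).re) c R = 0 := by
    have := ((2 : ℝ) • reCLM).circleAverage_comp_comm hℓ
    rw [hℓF.circleAverage, sub_self, inner_zero_right, map_zero] at this
    exact this
  have hexpand : ∀ z, ‖F z‖ ^ 2 =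
      ‖F c‖ ^ 2 + (2 * (inner ℂ (F c) (F z - F c)).re + ‖F z - F c‖ ^ 2) := by
    intro z
    have := norm_add_sq (𝕜 := ℂ) (F c) (F z - F c)
    rwa [add_sub_cancel, add_assoc] at this
  have hsum : CircleIntegrable (fun z => 2 * (inner ℂ (F c) (F z - F c)).re +
    ‖F z - F c‖ ^ 2) c R := hre.add hsq
  rw [funext hexpand, Real.circleAverage_fun_add (circleIntegrable_const _ _ _) hsum,
    Real.circleAverage_fun_add hre hsq, hzero, Real.circleAverage_const, zero_add]

theorem norm_sq_le_circleAverage {E : Type*} [NormedAddCommGroup E] [InnerProductSpace ℂ E]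
    [CompleteSpace E] {F : ℂ → E} {c : ℂ} {R : ℝ} (hF : DiffContOnCl ℂ F (ball c |R|)) :
    ‖F c‖ ^ 2 ≤ Real.circleAverage (fun z => ‖F z‖ ^ 2) c R := by
  rw [circleAverage_norm_sq_eq_add hF, le_add_iff_nonneg_right]
  exact Real.circleAverage_nonneg_of_nonneg fun z _ => sq_nonneg _

theorem circleAverage_norm_sq_div_pow_add {H : ℂ → ℂ} {r : ℝ} (hr : 0 < r)
    (hH : DiffContOnCl ℂ H (ball 0 r)) (a : ℂ) {n : ℕ} (hn : n ≠ 0) :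
    Real.circleAverage (fun z => ‖a / z ^ n + H z‖ ^ 2) 0 r =
      (‖a‖ / r ^ n) ^ 2 + Real.circleAverage (fun z => ‖H z‖ ^ 2) 0 r := by
  have hF : DiffContOnCl ℂ (fun z => a + z ^ n * H z) (ball 0 |r|) := by
    rw [abs_of_pos hr]
    exact ((differentiable_pow n).diffContOnCl.smul hH).const_add a
  have hnorm : ∀ z ∈ sphere (0 : ℂ) |r|, ‖z‖ = r := fun z hz => by
    simpa [abs_of_pos hr] using hz
  calc Real.circleAverage (fun z => ‖a / z ^ n + H z‖ ^ 2) 0 r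
      = Real.circleAverage (fun z => (r ^ n)⁻¹ ^ 2 • ‖a + z ^ n * H z‖ ^ 2) 0 r := by
        refine Real.circleAverage_congr_sphere fun z hz => ?_
        have hz0 : z ^ n ≠ 0 := pow_ne_zero n (norm_pos_iff.1 ((hnorm z hz).symm ▸ hr))
        have hz' : a + z ^ n * H z = z ^ n * (a / z ^ n + H z) := by field_simp
        rw [hz', norm_mul, norm_pow, hnorm z hz, smul_eq_mul]
        field_simp
    _ = (r ^ n)⁻¹ ^ 2 * (‖a‖ ^ 2 +
          Real.circleAverage (fun z => (r ^ n) ^ 2 • ‖H z‖ ^ 2) 0 r) := by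
        rw [Real.circleAverage_fun_smul, circleAverage_norm_sq_eq_add hF, smul_eq_mul]
        congr 2
        · simp [hn]
        · refine Real.circleAverage_congr_sphere fun z hz => ?_
          simp [hn, hnorm z hz, mul_pow]
    _ = (‖a‖ / r ^ n) ^ 2 + Real.circleAverage (fun z => ‖H z‖ ^ 2) 0 r := by
        rw [Real.circleAverage_fun_smul, smul_eq_mul]
        field_simp

theorem setLIntegral_circleMap_eq_circleAverage {φ : ℂ → ℝ} {c : ℂ} {r : ℝ}
    (hφ : ContinuousOn φ (sphere c |r|)) (hφ0 : ∀ z ∈ sphere c |r|, 0 ≤ φ z) :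
    ∫⁻ θ in Ioo (-Real.pi) Real.pi, ENNReal.ofReal (φ (circleMap c r θ)) =
      ENNReal.ofReal (2 * Real.pi * Real.circleAverage φ c r) := by
  have hcont : Continuous fun θ => φ (circleMap c r θ) :=
    hφ.comp_continuous (continuous_circleMap c r) (circleMap_mem_sphere' c r)
  have hint : IntegrableOn (fun θ => φ (circleMap c r θ)) (Ioo (-Real.pi) Real.pi) :=
    hcont.integrableOn_Icc.mono_set Ioo_subset_Icc_self
  have hshift : ∫ θ in Ioo (-Real.pi) Real.pi, φ (circleMap c r θ) =
      ∫ θ in (0 : ℝ)..2 * Real.pi, φ (circleMap c r (θ + -Real.pi)) := by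
    rw [intervalIntegral.integral_comp_add_right (fun θ => φ (circleMap c r θ)),
      ← integral_Ioc_eq_integral_Ioo,
      ← intervalIntegral.integral_of_le (by linarith [Real.pi_pos])]
    congr 1 <;> ring
  rw [← ofReal_integral_eq_lintegral_ofReal hint
    (Eventually.of_forall fun θ => hφ0 _ (circleMap_mem_sphere' c r θ)), hshift,
    Real.circleAverage_eq_integral_add (-Real.pi), smul_eq_mul,
    mul_inv_cancel_left₀ Real.two_pi_pos.ne']

theorem lintegral_eq_lintegral_circleMap {F : ℂ → ENNReal} (hF : Measurable F) :
    ∫⁻ z, F z = ∫⁻ r in Ioi (0 : ℝ), ENNReal.ofReal r *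
      ∫⁻ θ in Ioo (-Real.pi) Real.pi, F (circleMap 0 r θ) := by
  have hcircle : ∀ p : ℝ × ℝ, Complex.polarCoord.symm p = circleMap 0 p.1 p.2 := fun p => by
    simp [Complex.polarCoord_symm_apply, circleMap, exp_mul_I]
  have hmeas : Measurable fun p : ℝ × ℝ => ENNReal.ofReal p.1 * F (circleMap 0 p.1 p.2) := by
    refine measurable_fst.ennreal_ofReal.mul (hF.comp ?_)
    simp only [circleMap]
    fun_prop
  rw [← Complex.lintegral_comp_polarCoord_symm, polarCoord_target, Measure.volume_eq_prod]
  simp only [hcircle, smul_eq_mul]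
  rw [setLIntegral_prod _ hmeas.aemeasurable]
  exact lintegral_congr fun r => lintegral_const_mul' _ _ ENNReal.ofReal_ne_top

theorem setLIntegral_annulus_eq_circleAverage {φ : ℂ → ℝ} {ρ R : ℝ} (hρ : 0 ≤ ρ)
    (hφ : ContinuousOn φ (ball 0 R \ closedBall 0 ρ))
    (hφ0 : ∀ z ∈ ball 0 R \ closedBall 0 ρ, 0 ≤ φ z) :
    ∫⁻ z in ball 0 R \ closedBall 0 ρ, ENNReal.ofReal (φ z) =
      ∫⁻ r in Ioo ρ R, ENNReal.ofReal (2 * Real.pi * r * Real.circleAverage φ 0 r) := by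
  set A : Set ℂ := ball 0 R \ closedBall 0 ρ
  have hA : MeasurableSet A := measurableSet_ball.diff measurableSet_closedBall
  have hF : Measurable (A.indicator fun z => ENNReal.ofReal (φ z)) := by
    classical
    have := (ENNReal.continuous_ofReal.comp_continuousOn hφ).measurable_piecewise
      (continuousOn_const (c := 0)) hA
    rwa [← Set.piecewise_eq_indicator]
  have hmemA : ∀ r ∈ Ioi (0 : ℝ), ∀ z ∈ sphere (0 : ℂ) |r|, z ∈ A ↔ r ∈ Ioo ρ R := by
    intro r hr z hz
    have hz : ‖z‖ = r := by simpa [abs_of_pos (mem_Ioi.1 hr)] using hz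
    simp [A, hz, and_comm]
  have hinner : ∀ r ∈ Ioi (0 : ℝ), ENNReal.ofReal r * ∫⁻ θ in Ioo (-Real.pi) Real.pi,
      A.indicator (fun z => ENNReal.ofReal (φ z)) (circleMap 0 r θ) = (Ioo ρ R).indicator
        (fun r => ENNReal.ofReal (2 * Real.pi * r * Real.circleAverage φ 0 r)) r := by
    intro r hr
    have hcircleA : ∀ θ, circleMap 0 r θ ∈ A ↔ r ∈ Ioo ρ R := fun θ =>
      hmemA r hr _ (circleMap_mem_sphere' 0 r θ)
    by_cases hrR : r ∈ Ioo ρ R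
    · have hsub : sphere 0 |r| ⊆ A := fun z hz => (hmemA r hr z hz).2 hrR
      simp only [indicator_of_mem hrR, indicator_of_mem ((hcircleA _).2 hrR)]
      rw [setLIntegral_circleMap_eq_circleAverage (hφ.mono hsub) fun z hz => hφ0 z (hsub hz),
        ← ENNReal.ofReal_mul (le_of_lt hr), ← mul_assoc, mul_comm r]
    · simp [hcircleA, hrR]
  have hIoo : Ioo ρ R ⊆ Ioi 0 := fun r hr => hρ.trans_lt hr.1
  rw [← lintegral_indicator hA, lintegral_eq_lintegral_circleMap hF,
    setLIntegral_congr_fun measurableSet_Ioi hinner, lintegral_indicator measurableSet_Ioo,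
    Measure.restrict_restrict measurableSet_Ioo, inter_eq_left.2 hIoo]

theorem integral_Ioo_mul_inv_pow_three_add_mul {ρ R : ℝ} (hρ : 0 < ρ) (hρR : ρ < R) (a b : ℝ) :
    ∫ r in Ioo ρ R, 2 * (a * (r ^ 3)⁻¹ + b * r) =
      a * ((ρ ^ 2)⁻¹ - (R ^ 2)⁻¹) + b * (R ^ 2 - ρ ^ 2) := by
  have hpos : ∀ r ∈ uIcc ρ R, r ≠ 0 := fun r hr => by
    rw [uIcc_of_le hρR.le] at hr
    exact (hρ.trans_le hr.1).ne'
  have hderiv : ∀ r ∈ uIcc ρ R, HasDerivAt (fun r => a * -(r ^ 2)⁻¹ + b * r ^ 2)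
      (2 * (a * (r ^ 3)⁻¹ + b * r)) r := fun r hr => by
    have hr0 := hpos r hr
    have hsq : HasDerivAt (fun r : ℝ => r ^ 2) (2 * r) r := by simpa using hasDerivAt_pow 2 r
    refine (((hsq.fun_inv (pow_ne_zero 2 hr0)).fun_neg.const_mul a).fun_add
      (hsq.const_mul b)).congr_deriv ?_
    field_simp
  have hcont : ContinuousOn (fun r => 2 * (a * (r ^ 3)⁻¹ + b * r)) (uIcc ρ R) := by
    have : ∀ r ∈ uIcc ρ R, r ^ 3 ≠ 0 := fun r hr => pow_ne_zero 3 (hpos r hr)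
    fun_prop (disch := assumption)
  rw [← integral_Ioc_eq_integral_Ioo, ← intervalIntegral.integral_of_le hρR.le,
    intervalIntegral.integral_eq_sub_of_hasDerivAt hderiv hcont.intervalIntegrable]
  ring

theorem le_setLIntegral_annulus_norm_sq_div_sq_add {H : ℂ → ℂ} {ρ R : ℝ} (hρ : 0 < ρ)
    (hρR : ρ < R) (hH : DifferentiableOn ℂ H (ball 0 R)) (a : ℂ) :
    ENNReal.ofReal (Real.pi *
        (‖a‖ ^ 2 * ((ρ ^ 2)⁻¹ - (R ^ 2)⁻¹) + ‖H 0‖ ^ 2 * (R ^ 2 - ρ ^ 2))) ≤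
      ∫⁻ z in ball 0 R \ closedBall 0 ρ, ENNReal.ofReal (‖a / z ^ 2 + H z‖ ^ 2) := by
  have hcont : ContinuousOn (fun z => ‖a / z ^ 2 + H z‖ ^ 2) (ball 0 R \ closedBall 0 ρ) := by
    have hHc : ContinuousOn H (ball 0 R \ closedBall 0 ρ) := hH.continuousOn.mono sdiff_subset
    have hz : ∀ z ∈ ball (0 : ℂ) R \ closedBall 0 ρ, z ^ 2 ≠ 0 := by
      rintro z ⟨-, hz⟩
      refine pow_ne_zero 2 fun h => hz (h ▸ mem_closedBall_self hρ.le)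
    fun_prop (disch := assumption)
  set g : ℝ → ℝ := fun r => 2 * (‖a‖ ^ 2 * (r ^ 3)⁻¹ + ‖H 0‖ ^ 2 * r)
  have hg : ∀ r ∈ Ioo ρ R, Real.pi * g r ≤
      2 * Real.pi * r * Real.circleAverage (fun z => ‖a / z ^ 2 + H z‖ ^ 2) 0 r := by
    rintro r ⟨hρr, hrR⟩
    have hr : 0 < r := hρ.trans hρr
    have hHr : DiffContOnCl ℂ H (ball 0 r) :=
      (hH.mono (closure_ball_subset_closedBall.trans (closedBall_subset_ball hrR))).diffContOnCl
    have hH0 := norm_sq_le_circleAverage (R := r) (by rwa [abs_of_pos hr])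
    rw [circleAverage_norm_sq_div_pow_add hr hHr a two_ne_zero]
    calc Real.pi * g r = 2 * Real.pi * r * ((‖a‖ / r ^ 2) ^ 2 + ‖H 0‖ ^ 2) := by
          simp only [g]
          field_simp
      _ ≤ _ := by gcongr
  have hgcont : ContinuousOn (fun r => Real.pi * g r) (Icc ρ R) := by
    have : ∀ r ∈ Icc ρ R, r ^ 3 ≠ 0 := fun r hr => pow_ne_zero 3 (hρ.trans_le hr.1).ne'
    fun_prop (disch := assumption)
  have hg0 : 0 ≤ᵐ[volume.restrict (Ioo ρ R)] fun r => Real.pi * g r := by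
    filter_upwards [ae_restrict_mem measurableSet_Ioo] with r hr
    have : 0 < r := hρ.trans hr.1
    positivity
  rw [← integral_Ioo_mul_inv_pow_three_add_mul hρ hρR, ← integral_const_mul,
    ofReal_integral_eq_lintegral_ofReal (hgcont.integrableOn_Icc.mono_set Ioo_subset_Icc_self) hg0,
    setLIntegral_annulus_eq_circleAverage hρ.le hcont fun z _ => sq_nonneg _]
  exact setLIntegral_mono' measurableSet_Ioo fun r hr => ENNReal.ofReal_le_ofReal (hg r hr)

/-! ### The area theorem -/

theorem volume_image_eq_setLIntegral_norm_deriv_sq {G : ℂ → ℂ} {s : Set ℂ} (hs : MeasurableSet s)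
    (hG : ∀ z ∈ s, DifferentiableAt ℂ G z) (hinj : InjOn G s) :
    volume (G '' s) = ∫⁻ z in s, ENNReal.ofReal (‖deriv G z‖ ^ 2) := by
  rw [← lintegral_abs_det_fderiv_eq_addHaar_image volume hs
    (fun z hz => ((hG z hz).hasDerivAt.hasFDerivAt.restrictScalars ℝ).hasFDerivWithinAt) hinj]
  refine setLIntegral_congr_fun hs fun z _ => ?_
  simp [ContinuousLinearMap.det, LinearMap.det_restrictScalars, Algebra.norm_complex_apply,
    normSq_eq_norm_sq]

theorem hasDerivAt_inv_add {P : ℂ → ℂ} {z : ℂ} (hz : z ≠ 0) (hP : DifferentiableAt ℂ P z) :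
    HasDerivAt (fun z => z⁻¹ + P z) (-1 / z ^ 2 + deriv P z) z := by
  simpa [neg_div] using (hasDerivAt_inv hz).fun_add hP.hasDerivAt

theorem tendsto_inv_add_cocompact {P : ℂ → ℂ} (hP : ContinuousAt P 0) :
    Tendsto (fun z => z⁻¹ + P z) (𝓝[≠] 0) (cocompact ℂ) := by
  have hinv : Tendsto (fun z : ℂ => ‖z⁻¹‖) (𝓝[≠] 0) atTop :=
    tendsto_norm_cobounded_atTop.comp tendsto_inv₀_nhdsNE_zero
  have hP' : Tendsto (fun z => -‖P z‖) (𝓝[≠] 0) (𝓝 (-‖P 0‖)) :=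
    hP.norm.neg.tendsto.mono_left nhdsWithin_le_nhds
  rw [← cobounded_eq_cocompact, ← tendsto_norm_atTop_iff_cobounded]
  refine tendsto_atTop_mono (fun z => ?_) (hinv.atTop_add hP')
  rw [← sub_eq_add_neg]
  exact norm_sub_le_norm_add z⁻¹ (P z)

theorem mapsTo_annulus_preimage_closedBall {P : ℂ → ℂ} (hP : DifferentiableOn ℂ P (ball 0 1))
    (hinj : InjOn (fun z => z⁻¹ + P z) (ball 0 1 \ {0})) {T : ℂ →ₗ[ℝ] ℂ} (hT : T.det ≠ 0)
    {ρ M : ℝ} {w : ℂ} (hρ : 0 < ρ) (hρ1 : ρ < 1)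
    (hbd : MapsTo (fun z => z⁻¹ + P z) (sphere 0 ρ) (T ⁻¹' closedBall w M)) :
    MapsTo (fun z => z⁻¹ + P z) (ball 0 1 \ closedBall 0 ρ) (T ⁻¹' closedBall w M) := by
  have hM : 0 ≤ M := nonempty_closedBall.1 ⟨_, hbd (x := (ρ : ℂ)) (by simp [abs_of_pos hρ])⟩
  let e : ℂ ≃ₜ ℂ := (T.equivOfDetNeZero hT).toContinuousLinearEquiv.toHomeomorph
  have hPd : ∀ z ∈ ball (0 : ℂ) 1, DifferentiableAt ℂ P z := fun z hz =>
    hP.differentiableAt (isOpen_ball.mem_nhds hz)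
  refine mapsTo_diff_closedBall_of_injOn_of_tendsto_cocompact
    (fun z hz => (hasDerivAt_inv_add hz.2 (hPd z hz.1)).differentiableAt.differentiableWithinAt)
    hinj (tendsto_inv_add_cocompact (hPd 0 (mem_ball_self one_pos)).continuousAt) hρ
    (closedBall_subset_ball hρ1) ?_ ?_ hbd
  · exact e.isCompact_preimage.2 (isCompact_closedBall w M)
  · exact e.isPreconnected_preimage.2
      (isPreconnected_compl_closedBall (rank_real_complex.symm ▸ Nat.one_lt_ofNat) w hM)

theorem area_inequality {P : ℂ → ℂ} (hP : DifferentiableOn ℂ P (ball 0 1))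
    (hinj : InjOn (fun z => z⁻¹ + P z) (ball 0 1 \ {0})) {T : ℂ →ₗ[ℝ] ℂ} (hT : T.det ≠ 0)
    {ρ M : ℝ} {w : ℂ} (hρ : 0 < ρ) (hρ1 : ρ < 1)
    (hbd : MapsTo (fun z => z⁻¹ + P z) (sphere 0 ρ) (T ⁻¹' closedBall w M)) :
    ((ρ ^ 2)⁻¹ - 1 + ‖deriv P 0‖ ^ 2 * (1 - ρ ^ 2)) * |T.det| ≤ M ^ 2 := by
  set A : Set ℂ := ball 0 1 \ closedBall 0 ρ
  have hA : MeasurableSet A := measurableSet_ball.diff measurableSet_closedBall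
  have hA0 : A ⊆ ball 0 1 \ {0} :=
    sdiff_subset_sdiff_right (singleton_subset_iff.2 (mem_closedBall_self hρ.le))
  have hG : ∀ z ∈ A, HasDerivAt (fun z => z⁻¹ + P z) (-1 / z ^ 2 + deriv P z) z := fun z hz =>
    hasDerivAt_inv_add (hA0 hz).2 (hP.differentiableAt (isOpen_ball.mem_nhds hz.1))
  have hM : 0 ≤ M := nonempty_closedBall.1 ⟨_, hbd (x := (ρ : ℂ)) (by simp [abs_of_pos hρ])⟩
  have hlower : ENNReal.ofReal (Real.pi * ((ρ ^ 2)⁻¹ - 1 + ‖deriv P 0‖ ^ 2 * (1 - ρ ^ 2))) ≤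
      volume ((fun z => z⁻¹ + P z) '' A) := by
    rw [volume_image_eq_setLIntegral_norm_deriv_sq hA (fun z hz => (hG z hz).differentiableAt)
      (hinj.mono hA0), setLIntegral_congr_fun hA fun z hz => by rw [(hG z hz).deriv]]
    simpa using le_setLIntegral_annulus_norm_sq_div_sq_add hρ hρ1 (hP.deriv isOpen_ball) (-1)
  have hupper : volume ((fun z => z⁻¹ + P z) '' A) ≤
      ENNReal.ofReal (|T.det|⁻¹ * (Real.pi * M ^ 2)) := by
    refine (measure_mono
      (mapsTo_annulus_preimage_closedBall hP hinj hT hρ hρ1 hbd).image_subset).trans_eq ?_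
    rw [Measure.addHaar_preimage_linearMap _ hT, volume_closedBall, abs_inv,
      ENNReal.ofReal_mul (by positivity), mul_comm Real.pi, ENNReal.ofReal_mul (sq_nonneg M),
      ENNReal.ofReal_pow hM, ← NNReal.coe_real_pi, ENNReal.ofReal_coe_nnreal]
  have h := (ENNReal.ofReal_le_ofReal_iff (by positivity)).1 (hlower.trans hupper)
  rw [mul_left_comm] at h
  rw [← le_div_iff₀ (abs_pos.2 hT), div_eq_inv_mul]
  exact le_of_mul_le_mul_left h Real.pi_pos

/-- The real-linear map `u ↦ u - c * conj u`. For `c = ρ ^ 2 * b` it undoes, to first order, the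
distortion of the circle `‖z‖ = ρ⁻¹` into an ellipse caused by the term `b * z` of a Laurent
expansion `z⁻¹ + b * z + ⋯`. -/
noncomputable def idSubMulConj (c : ℂ) : ℂ →ₗ[ℝ] ℂ :=
  LinearMap.id - (LinearMap.mulLeft ℝ c).comp conjAe.toLinearMap

theorem idSubMulConj_apply (c u : ℂ) : idSubMulConj c u = u - c * conj u := rfl

theorem det_idSubMulConj (c : ℂ) : (idSubMulConj c).det = 1 - ‖c‖ ^ 2 := by
  rw [← LinearMap.det_toMatrix basisOneI, Matrix.det_fin_two]
  simp only [LinearMap.toMatrix_apply, idSubMulConj_apply, coe_basisOneI,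
    Matrix.cons_val_zero, Matrix.cons_val_one, coe_basisOneI_repr, ← normSq_eq_norm_sq,
    normSq_apply]
  simp only [map_one, mul_one, sub_re, one_re, conj_I, mul_neg, sub_neg_eq_add, add_im, I_im,
    mul_im, I_re, mul_zero, add_zero, add_re, mul_re, zero_sub, zero_add, sub_im, one_im, neg_mul,
    neg_neg]
  ring

theorem norm_idSubMulConj_le (c u : ℂ) : ‖idSubMulConj c u‖ ≤ (1 + ‖c‖) * ‖u‖ := by
  rw [idSubMulConj_apply, add_mul, one_mul]
  simpa using norm_sub_le u (c * conj u)

theorem idSubMulConj_inv_add_mul {z : ℂ} (hz : z ≠ 0) (b : ℂ) :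
    idSubMulConj (‖z‖ ^ 2 * b) (z⁻¹ + b * z) = z⁻¹ - ‖z‖ ^ 2 * (b * conj b) * conj z := by
  have hz' : conj z ≠ 0 := (map_ne_zero _).2 hz
  rw [idSubMulConj_apply, ← mul_conj']
  simp only [map_add, map_mul, map_inv₀]
  field_simp
  ring

theorem isBigO_sub_sub_deriv_mul {P : ℂ → ℂ} {a : ℂ} (hP : AnalyticAt ℂ P a) :
    (fun z => P z - P a - deriv P a * (z - a)) =O[𝓝 a] fun z => (z - a) ^ 2 := by
  have hd : DifferentiableAt ℂ (dslope P a) a := by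
    obtain ⟨p, hp⟩ := hP
    exact hp.has_fpower_series_dslope_fslope.analyticAt.differentiableAt
  have hmul : ∀ z, P z - P a - deriv P a * (z - a) =
      (dslope P a z - dslope P a a) * (z - a) := fun z => by
    rw [sub_mul, mul_comm (dslope P a z), ← smul_eq_mul (z - a), sub_smul_dslope, dslope_same]
  simpa only [hmul, sq] using hd.isBigO_sub.mul (Asymptotics.isBigO_refl (fun z => z - a) (𝓝 a))

theorem mapsTo_sphere_preimage_idSubMulConj {P : ℂ → ℂ} {ρ C : ℝ} (hρ : 0 < ρ) (hρ1 : ρ < 1)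
    (hC : ∀ z ∈ sphere (0 : ℂ) ρ, ‖P z - P 0 - deriv P 0 * z‖ ≤ C * ρ ^ 2) :
    MapsTo (fun z => z⁻¹ + P z) (sphere 0 ρ) (idSubMulConj (ρ ^ 2 * deriv P 0) ⁻¹'
      closedBall (idSubMulConj (ρ ^ 2 * deriv P 0) (P 0))
        (ρ⁻¹ + (‖deriv P 0‖ ^ 2 + (1 + ‖deriv P 0‖) * C) * ρ ^ 2)) := by
  intro z hz
  set b := deriv P 0
  set T := idSubMulConj (ρ ^ 2 * b)
  have hzρ : ‖z‖ = ρ := by simpa using hz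
  have hz0 : z ≠ 0 := norm_pos_iff.1 (hzρ.symm ▸ hρ)
  have hρ2 : ρ ^ 2 ≤ 1 := pow_le_one₀ hρ.le hρ1.le
  have hρ3 : ρ ^ 3 ≤ ρ ^ 2 := pow_le_pow_of_le_one hρ.le hρ1.le (by norm_num)
  have hmain : ‖T (z⁻¹ + b * z)‖ ≤ ρ⁻¹ + ‖b‖ ^ 2 * ρ ^ 2 := by
    simp only [T, ← hzρ, idSubMulConj_inv_add_mul hz0]
    refine (norm_sub_le _ _).trans ?_
    simp only [norm_mul, norm_inv, norm_pow, RCLike.norm_conj, norm_real, norm_norm]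
    rw [hzρ]
    nlinarith [mul_le_mul_of_nonneg_left hρ3 (sq_nonneg ‖b‖)]
  have herr : ‖T (P z - P 0 - b * z)‖ ≤ (1 + ‖b‖) * C * ρ ^ 2 := by
    refine (norm_idSubMulConj_le _ _).trans ?_
    rw [mul_assoc]
    refine mul_le_mul ?_ (hC z hz) (norm_nonneg _) (by positivity)
    rw [norm_mul, norm_pow, norm_real, Real.norm_of_nonneg hρ.le]
    gcongr
    exact mul_le_of_le_one_left (norm_nonneg b) hρ2
  have hsplit : T (z⁻¹ + P z) - T (P 0) = T (z⁻¹ + b * z) + T (P z - P 0 - b * z) := by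
    rw [← map_sub, ← map_add]
    congr 1
    ring
  rw [mem_preimage, mem_closedBall, dist_eq_norm, hsplit, add_mul, ← add_assoc]
  exact norm_add_le_of_le hmain herr

theorem norm_deriv_le_one_of_injOn_inv_add {P : ℂ → ℂ} (hP : DifferentiableOn ℂ P (ball 0 1))
    (hinj : InjOn (fun z => z⁻¹ + P z) (ball 0 1 \ {0})) : ‖deriv P 0‖ ≤ 1 := by
  set b := deriv P 0
  obtain ⟨C, hC⟩ := (isBigO_sub_sub_deriv_mul (hP.analyticAt (ball_mem_nhds 0 one_pos))).bound
  obtain ⟨δ, hδ, hCδ⟩ := Metric.eventually_nhds_iff_ball.1 hC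
  set K : ℝ := ‖b‖ ^ 2 + (1 + ‖b‖) * C
  have hsmall : ∀ᶠ ρ : ℝ in 𝓝[>] 0, ρ ^ 2 * ‖b‖ < 1 :=
    nhdsWithin_le_nhds (((by fun_prop : Continuous fun ρ : ℝ => ρ ^ 2 * ‖b‖).tendsto' 0 0
      (by simp)).eventually_lt_const one_pos)
  have harea : ∀ᶠ ρ : ℝ in 𝓝[>] 0, ((ρ ^ 2)⁻¹ - 1 + ‖b‖ ^ 2 * (1 - ρ ^ 2)) *
      (1 - (ρ ^ 2 * ‖b‖) ^ 2) ≤ (ρ⁻¹ + K * ρ ^ 2) ^ 2 := by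
    filter_upwards [hsmall, Ioo_mem_nhdsGT hδ, Ioo_mem_nhdsGT one_pos] with ρ hρb hρδ hρ1
    have hdet : (idSubMulConj (ρ ^ 2 * b)).det = 1 - (ρ ^ 2 * ‖b‖) ^ 2 := by
      simp [det_idSubMulConj]
    have hdet0 : 0 < (idSubMulConj (ρ ^ 2 * b)).det := by
      have : 0 ≤ ρ ^ 2 * ‖b‖ := by positivity
      rw [hdet]
      nlinarith
    have hbound : ∀ z ∈ sphere (0 : ℂ) ρ, ‖P z - P 0 - b * z‖ ≤ C * ρ ^ 2 := fun z hz => by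
      have hz : ‖z‖ = ρ := by simpa using hz
      simpa [hz] using hCδ z (by simpa [hz] using hρδ.2)
    have h := area_inequality hP hinj hdet0.ne' hρ1.1 hρ1.2
      (mapsTo_sphere_preimage_idSubMulConj hρ1.1 hρ1.2 hbound)
    rwa [abs_of_pos hdet0, hdet] at h
  -- The terms `ρ⁻²` on the two sides of `harea` cancel.
  have hpoly : ∀ᶠ ρ : ℝ in 𝓝[>] 0, ‖b‖ ^ 2 - 1 ≤
      ρ * (2 * K + K ^ 2 * ρ ^ 3 + ‖b‖ ^ 2 * ρ * (2 + ρ ^ 2 * (‖b‖ ^ 2 * (1 - ρ ^ 2) - 1))) := by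
    filter_upwards [harea, self_mem_nhdsWithin] with ρ h hρ
    have hρ : ρ ≠ 0 := (mem_Ioi.1 hρ).ne'
    rw [← sub_nonneg] at h ⊢
    convert h using 1
    field_simp
    ring
  have hlim : Tendsto (fun ρ : ℝ => ρ * (2 * K + K ^ 2 * ρ ^ 3 +
      ‖b‖ ^ 2 * ρ * (2 + ρ ^ 2 * (‖b‖ ^ 2 * (1 - ρ ^ 2) - 1)))) (𝓝[>] 0) (𝓝 0) :=
    (Continuous.tendsto' (by fun_prop) 0 0 (by simp)).mono_left nhdsWithin_le_nhds
  exact (sq_le_one_iff₀ (norm_nonneg b)).1 (sub_nonpos.1 (ge_of_tendsto hlim hpoly))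

/-! ### Bieberbach's inequality -/

theorem exists_differentiableOn_ball_mul_exp_eq {p : ℂ → ℂ} {c : ℂ} {r : ℝ} (hr : 0 < r)
    (hp : DifferentiableOn ℂ p (ball c r)) (hp0 : ∀ z ∈ ball c r, p z ≠ 0) :
    ∃ l : ℂ → ℂ, DifferentiableOn ℂ l (ball c r) ∧ l c = 0 ∧
      ∀ z ∈ ball c r, p c * exp (l z) = p z := by
  have hc : c ∈ ball c r := mem_ball_self hr
  obtain ⟨l, hlc, hl⟩ := ((hp.deriv isOpen_ball).div hp hp0).isExactOn_ball.with_val_at c 0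
  have hconst : ∀ z ∈ ball c r, HasDerivAt (fun z => exp (-l z) * p z) 0 z := fun z hz => by
    refine ((hl z hz).neg.cexp.fun_mul
      (hp.differentiableAt (isOpen_ball.mem_nhds hz)).hasDerivAt).congr_deriv ?_
    have := hp0 z hz
    simp only [Pi.neg_apply, Pi.div_apply]
    field_simp
    ring
  refine ⟨l, fun z hz => (hl z hz).differentiableAt.differentiableWithinAt, hlc, fun z hz => ?_⟩
  have hz : exp (-l z) * p z = exp (-l c) * p c :=
    isOpen_ball.is_const_of_deriv_eq_zero (convex_ball c r).isPreconnected
      (fun z hz => (hconst z hz).differentiableAt.differentiableWithinAt)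
      (fun z hz => (hconst z hz).deriv) hz hc
  rw [hlc, neg_zero, exp_zero, one_mul] at hz
  rw [← hz, mul_right_comm, ← exp_add, neg_add_cancel, exp_zero, one_mul]

theorem deriv_deriv_eq_two_mul_deriv_dslope {g : ℂ → ℂ} {a : ℂ} (hg : AnalyticAt ℂ g a) :
    deriv (deriv g) a = 2 * deriv (dslope g a) a := by
  set p := dslope g a
  have hp : AnalyticAt ℂ p a := by
    obtain ⟨q, hq⟩ := hg
    exact hq.has_fpower_series_dslope_fslope.analyticAt
  have hgp : g = fun z => g a + (z - a) * p z := funext fun z => by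
    rw [← smul_eq_mul, sub_smul_dslope, add_sub_cancel]
  have hg' : deriv g =ᶠ[𝓝 a] fun z => p z + (z - a) * deriv p z := by
    filter_upwards [hp.eventually_analyticAt] with z hz
    rw [hgp]
    simpa using ((((hasDerivAt_id' z).sub_const a).fun_mul
      hz.differentiableAt.hasDerivAt).const_add (g a)).deriv
  rw [hg'.deriv_eq, (hp.differentiableAt.hasDerivAt.fun_add
    (((hasDerivAt_id' a).sub_const a).fun_mul hp.deriv.differentiableAt.hasDerivAt)).deriv]
  ring

theorem injOn_comp_sq_div_of_injOn {g k : ℂ → ℂ} {A : ℂ} (hg : InjOn g (ball 0 1)) (hA : A ≠ 0)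
    (hk : ∀ z ∈ ball (0 : ℂ) 1, k z ^ 2 * (g z - g 0) = A * z) :
    InjOn (fun z => k (z ^ 2) / z) (ball 0 1 \ {0}) := by
  have hsq : ∀ z ∈ ball (0 : ℂ) 1, z ^ 2 ∈ ball (0 : ℂ) 1 := fun z hz => by
    simpa using hz
  have hval : ∀ z ∈ ball (0 : ℂ) 1 \ {0}, (k (z ^ 2) / z) ^ 2 * (g (z ^ 2) - g 0) = A := by
    rintro z ⟨hz, hz0⟩
    have hz0 : z ≠ 0 := hz0
    rw [div_pow, div_mul_eq_mul_div, hk _ (hsq z hz), mul_div_cancel_right₀ _ (pow_ne_zero 2 hz0)]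
  rintro x hx y hy (hxy : k (x ^ 2) / x = k (y ^ 2) / y)
  have hne : k (y ^ 2) / y ≠ 0 := fun h => hA (by
    rw [← hval y hy, h, zero_pow two_ne_zero, zero_mul])
  have hg_eq : g (x ^ 2) = g (y ^ 2) := by
    have h := hval x hx
    rw [hxy, ← hval y hy] at h
    exact sub_left_injective (mul_left_cancel₀ (pow_ne_zero 2 hne) h)
  have hsq_eq : x ^ 2 = y ^ 2 := hg (hsq x hx.1) (hsq y hy.1) hg_eq
  refine (sq_eq_sq_iff_eq_or_eq_neg.1 hsq_eq).resolve_right fun h => hne ?_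
  rw [hsq_eq, h, div_neg] at hxy
  exact self_eq_neg.1 hxy.symm

theorem norm_deriv_le_one_of_injOn_comp_sq_div {k : ℂ → ℂ} (hk : DifferentiableOn ℂ k (ball 0 1))
    (hk0 : k 0 = 1) (hinj : InjOn (fun z => k (z ^ 2) / z) (ball 0 1 \ {0})) :
    ‖deriv k 0‖ ≤ 1 := by
  have h01 : ball (0 : ℂ) 1 ∈ 𝓝 0 := ball_mem_nhds _ one_pos
  have hslope : DifferentiableOn ℂ (fun z : ℂ => dslope k 0 (z ^ 2)) (ball 0 1) :=
    ((differentiableOn_dslope h01).2 hk).comp (by fun_prop) fun z hz => by simpa using hz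
  have hP : deriv (fun z => z * dslope k 0 (z ^ 2)) 0 = deriv k 0 := by
    rw [((hasDerivAt_id' (0 : ℂ)).fun_mul (hslope.differentiableAt h01).hasDerivAt).deriv]
    simp
  rw [← hP]
  refine norm_deriv_le_one_of_injOn_inv_add (differentiableOn_id.mul hslope) (hinj.congr ?_)
  rintro z ⟨-, hz⟩
  have hz : z ≠ 0 := hz
  have hk_eq : k (z ^ 2) = 1 + z ^ 2 * dslope k 0 (z ^ 2) := by
    have := sub_smul_dslope k 0 (z ^ 2)
    rw [sub_zero, hk0, smul_eq_mul] at this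
    rw [this, add_sub_cancel]
  simp only [hk_eq]
  field_simp

theorem exists_differentiableOn_ball_sq_mul_eq {p : ℂ → ℂ} {c : ℂ} {r : ℝ} (hr : 0 < r)
    (hp : DifferentiableOn ℂ p (ball c r)) (hp0 : ∀ z ∈ ball c r, p z ≠ 0) :
    ∃ k : ℂ → ℂ, DifferentiableOn ℂ k (ball c r) ∧ k c = 1 ∧
      ∀ z ∈ ball c r, k z ^ 2 * p z = p c := by
  obtain ⟨l, hl, hlc, hlp⟩ := exists_differentiableOn_ball_mul_exp_eq hr hp hp0
  refine ⟨fun z => exp (-l z / 2), by fun_prop, by simp [hlc], fun z hz => ?_⟩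
  rw [← hlp z hz, ← exp_nat_mul, mul_left_comm, ← exp_add]
  simp [mul_div_cancel₀]

theorem norm_deriv_deriv_zero_le_of_injOn {g : ℂ → ℂ} (hg : DifferentiableOn ℂ g (ball 0 1))
    (hinj : InjOn g (ball 0 1)) : ‖deriv (deriv g) 0‖ ≤ 4 * ‖deriv g 0‖ := by
  have h0 : (0 : ℂ) ∈ ball (0 : ℂ) 1 := mem_ball_self one_pos
  have h01 : ball (0 : ℂ) 1 ∈ 𝓝 0 := isOpen_ball.mem_nhds h0
  set p := dslope g 0
  have hp : DifferentiableOn ℂ p (ball 0 1) := (differentiableOn_dslope h01).2 hg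
  have hp0 : p 0 = deriv g 0 := dslope_same g 0
  have hgp : ∀ z, z * p z = g z - g 0 := fun z => by simpa using sub_smul_dslope g 0 z
  have hpne : ∀ z ∈ ball (0 : ℂ) 1, p z ≠ 0 := fun z hz hpz => by
    rcases eq_or_ne z 0 with rfl | hz0
    · exact deriv_ne_zero_of_injOn hg isOpen_ball hinj h0 (hp0 ▸ hpz)
    · exact hz0 (hinj hz h0 (sub_eq_zero.1 (by rw [← hgp, hpz, mul_zero])))
  obtain ⟨k, hk, hk0, hkp⟩ := exists_differentiableOn_ball_sq_mul_eq one_pos hp hpne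
  have hk1 : ‖deriv k 0‖ ≤ 1 := norm_deriv_le_one_of_injOn_comp_sq_div hk hk0
    (injOn_comp_sq_div_of_injOn hinj (hpne 0 h0) fun z hz => by
      rw [← hgp, mul_left_comm, hkp z hz, mul_comm])
  have hp' : deriv p 0 = -(2 * (deriv g 0 * deriv k 0)) := by
    have hkp' := (((hk.differentiableAt h01).hasDerivAt.fun_pow 2).fun_mul
      (hp.differentiableAt h01).hasDerivAt).unique
      ((hasDerivAt_const 0 (p 0)).congr_of_eventuallyEq (by filter_upwards [h01] using hkp))
    simp only [hk0, hp0] at hkp'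
    linear_combination hkp'
  calc ‖deriv (deriv g) 0‖ = ‖4 * (deriv g 0 * deriv k 0)‖ := by
        rw [deriv_deriv_eq_two_mul_deriv_dslope (hg.analyticAt h01), hp', ← norm_neg]
        ring_nf
    _ = 4 * (‖deriv g 0‖ * ‖deriv k 0‖) := by rw [norm_mul, norm_mul, RCLike.norm_ofNat]
    _ ≤ 4 * ‖deriv g 0‖ := by
      gcongr
      exact mul_le_of_le_one_right (norm_nonneg _) hk1

/-! ### Disk automorphisms and Koebe's theorems -/

theorem norm_mul_lt_one {R : Type*} [SeminormedRing R] {a b : R} (ha : ‖a‖ ≤ 1) (hb : ‖b‖ < 1) :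
    ‖a * b‖ < 1 :=
  (norm_mul_le a b).trans_lt (mul_lt_one_of_nonneg_of_lt_one_right ha (norm_nonneg b) hb)

/-- The disk automorphism carrying `0` to `a`, used to move Bieberbach's inequality from `0` to
`a`. -/
noncomputable def diskAutomorphism (a z : ℂ) : ℂ := (z + a) / (1 + conj a * z)

section DiskAutomorphism

variable {a z : ℂ}

@[simp]
theorem diskAutomorphism_zero (a : ℂ) : diskAutomorphism a 0 = a := by simp [diskAutomorphism]

theorem one_add_conj_mul_ne_zero (ha : ‖a‖ < 1) (hz : ‖z‖ < 1) : 1 + conj a * z ≠ 0 := by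
  have h : ‖-(conj a * z)‖ < 1 := by
    rw [norm_neg]
    exact norm_mul_lt_one (RCLike.norm_conj a ▸ ha.le) hz
  simpa using (isUnit_one_sub_of_norm_lt_one h).ne_zero

theorem hasDerivAt_diskAutomorphism (ha : ‖a‖ < 1) (hz : ‖z‖ < 1) :
    HasDerivAt (diskAutomorphism a) ((1 - conj a * a) / (1 + conj a * z) ^ 2) z := by
  refine (((hasDerivAt_id' z).add_const a).fun_div
    (((hasDerivAt_id' z).const_mul (conj a)).const_add 1)
    (one_add_conj_mul_ne_zero ha hz)).congr_deriv ?_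
  ring

theorem normSq_one_add_conj_mul_sub_normSq_add (a z : ℂ) :
    normSq (1 + conj a * z) - normSq (z + a) = (1 - normSq a) * (1 - normSq z) := by
  apply ofReal_injective
  push_cast [normSq_eq_conj_mul_self]
  simp only [map_add, map_mul, map_one, conj_conj]
  ring

theorem mapsTo_diskAutomorphism (ha : ‖a‖ < 1) :
    MapsTo (diskAutomorphism a) (ball 0 1) (ball 0 1) := fun z hz => by
  rw [mem_ball_zero_iff] at hz ⊢
  have hsq : ∀ u : ℂ, ‖u‖ < 1 → 0 < 1 - normSq u := fun u hu => by
    rw [normSq_eq_norm_sq, sub_pos]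
    exact pow_lt_one₀ (norm_nonneg u) hu two_ne_zero
  rw [diskAutomorphism, norm_div, div_lt_one (norm_pos_iff.2 (one_add_conj_mul_ne_zero ha hz)),
    ← sq_lt_sq₀ (norm_nonneg _) (norm_nonneg _), ← normSq_eq_norm_sq, ← normSq_eq_norm_sq,
    ← sub_pos, normSq_one_add_conj_mul_sub_normSq_add]
  exact mul_pos (hsq a ha) (hsq z hz)

theorem one_sub_conj_mul_self_ne_zero (ha : ‖a‖ < 1) : 1 - conj a * a ≠ 0 := by
  simpa [sub_eq_add_neg] using one_add_conj_mul_ne_zero ha (by rwa [norm_neg] : ‖-a‖ < 1)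

theorem injOn_diskAutomorphism (ha : ‖a‖ < 1) : InjOn (diskAutomorphism a) (ball 0 1) := by
  rintro x hx y hy (hxy : (x + a) / (1 + conj a * x) = (y + a) / (1 + conj a * y))
  rw [mem_ball_zero_iff] at hx hy
  rw [div_eq_div_iff (one_add_conj_mul_ne_zero ha hx) (one_add_conj_mul_ne_zero ha hy)] at hxy
  refine sub_eq_zero.1 ((mul_eq_zero.1 ?_).resolve_left (one_sub_conj_mul_self_ne_zero ha))
  linear_combination hxy

theorem deriv_comp_diskAutomorphism {g : ℂ → ℂ} (hg : DifferentiableOn ℂ g (ball 0 1))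
    (ha : ‖a‖ < 1) (hz : z ∈ ball (0 : ℂ) 1) :
    deriv (g ∘ diskAutomorphism a) z =
      deriv g (diskAutomorphism a z) * ((1 - conj a * a) / (1 + conj a * z) ^ 2) :=
  ((hg.differentiableAt (isOpen_ball.mem_nhds (mapsTo_diskAutomorphism ha hz))).hasDerivAt.comp z
    (hasDerivAt_diskAutomorphism ha (mem_ball_zero_iff.1 hz))).deriv

theorem deriv_deriv_comp_diskAutomorphism_zero {g : ℂ → ℂ}
    (hg : DifferentiableOn ℂ g (ball 0 1)) (ha : ‖a‖ < 1) :
    deriv (deriv (g ∘ diskAutomorphism a)) 0 =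
      (1 - conj a * a) * ((1 - conj a * a) * deriv (deriv g) a - 2 * conj a * deriv g a) := by
  set s := 1 - conj a * a
  have h01 : ball (0 : ℂ) 1 ∈ 𝓝 0 := ball_mem_nhds 0 one_pos
  have hderiv : deriv (g ∘ diskAutomorphism a) =ᶠ[𝓝 0]
      fun z => deriv g (diskAutomorphism a z) * (s / (1 + conj a * z) ^ 2) := by
    filter_upwards [h01] with z hz using deriv_comp_diskAutomorphism hg ha hz
  have hg' : HasDerivAt (deriv g) (deriv (deriv g) a) (diskAutomorphism a 0) := by
    rw [diskAutomorphism_zero]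
    exact ((hg.deriv isOpen_ball).differentiableAt
      (isOpen_ball.mem_nhds (mem_ball_zero_iff.2 ha))).hasDerivAt
  have hφ' : HasDerivAt (fun z => s / (1 + conj a * z) ^ 2) (-2 * conj a * s) 0 :=
    ((hasDerivAt_const 0 s).fun_div ((((hasDerivAt_id' (0 : ℂ)).const_mul (conj a)).const_add
      1).fun_pow 2) (by simp)).congr_deriv (by simp; ring)
  refine hderiv.deriv_eq.trans
    ((((hg'.comp 0 (hasDerivAt_diskAutomorphism ha (by simp))).fun_mul hφ').congr_deriv ?_).deriv)
  simp only [Function.comp_apply, diskAutomorphism_zero, mul_zero, add_zero, one_pow, div_one]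
  ring

end DiskAutomorphism

theorem norm_one_sub_mul_deriv_deriv_sub_le_of_injOn {g : ℂ → ℂ}
    (hg : DifferentiableOn ℂ g (ball 0 1)) (hinj : InjOn g (ball 0 1)) {a : ℂ} (ha : ‖a‖ < 1) :
    ‖(1 - conj a * a) * deriv (deriv g) a - 2 * conj a * deriv g a‖ ≤ 4 * ‖deriv g a‖ := by
  have hφ : DifferentiableOn ℂ (diskAutomorphism a) (ball 0 1) := fun z hz =>
    (hasDerivAt_diskAutomorphism ha
      (mem_ball_zero_iff.1 hz)).differentiableAt.differentiableWithinAt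
  have h := norm_deriv_deriv_zero_le_of_injOn (hg.comp hφ (mapsTo_diskAutomorphism ha))
    (hinj.comp (injOn_diskAutomorphism ha) (mapsTo_diskAutomorphism ha))
  rw [deriv_deriv_comp_diskAutomorphism_zero hg ha,
    deriv_comp_diskAutomorphism hg ha (mem_ball_self one_pos), diskAutomorphism_zero, mul_zero,
    add_zero, one_pow, div_one, mul_comm (deriv g a), norm_mul, norm_mul, mul_left_comm] at h
  exact le_of_mul_le_mul_left h (norm_pos_iff.2 (one_sub_conj_mul_self_ne_zero ha))

theorem norm_deriv_deriv_le_of_injOn {g : ℂ → ℂ} (hg : DifferentiableOn ℂ g (ball 0 1))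
    (hinj : InjOn g (ball 0 1)) {a : ℂ} (ha : ‖a‖ < 1) :
    (1 - ‖a‖ ^ 2) * ‖deriv (deriv g) a‖ ≤ (4 + 2 * ‖a‖) * ‖deriv g a‖ := by
  have hs : ‖1 - conj a * a‖ = 1 - ‖a‖ ^ 2 := by
    rw [conj_mul', ← ofReal_pow, ← ofReal_one, ← ofReal_sub, norm_real,
      Real.norm_of_nonneg (sub_nonneg.2 (pow_le_one₀ (norm_nonneg a) ha.le))]
  calc (1 - ‖a‖ ^ 2) * ‖deriv (deriv g) a‖ = ‖(1 - conj a * a) * deriv (deriv g) a‖ := by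
        rw [norm_mul, hs]
    _ ≤ ‖(1 - conj a * a) * deriv (deriv g) a - 2 * conj a * deriv g a‖ +
        ‖2 * conj a * deriv g a‖ := norm_le_norm_sub_add _ _
    _ ≤ 4 * ‖deriv g a‖ + 2 * ‖a‖ * ‖deriv g a‖ := by
        gcongr
        · exact norm_one_sub_mul_deriv_deriv_sub_le_of_injOn hg hinj ha
        · simp
    _ = (4 + 2 * ‖a‖) * ‖deriv g a‖ := by ring

theorem antitoneOn_norm_div_of_norm_deriv_mul_le {E : Type*} [NormedAddCommGroup E]
    [InnerProductSpace ℝ E] {f f' : ℝ → E} {B B' : ℝ → ℝ} {s : Set ℝ} (hs : Convex ℝ s)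
    (hf : ∀ t ∈ s, HasDerivAt f (f' t) t) (hB : ∀ t ∈ s, HasDerivAt B (B' t) t)
    (hB0 : ∀ t ∈ s, 0 < B t) (hle : ∀ t ∈ s, ‖f' t‖ * B t ≤ B' t * ‖f t‖) :
    AntitoneOn (fun t => ‖f t‖ / B t) s := by
  have hderiv : ∀ t ∈ s, HasDerivAt (fun t => ‖f t‖ ^ 2 / B t ^ 2)
      (2 * (inner ℝ (f t) (f' t) * B t - B' t * ‖f t‖ ^ 2) / B t ^ 3) t := fun t ht => by
    have := (hB0 t ht).ne'
    refine ((hf t ht).norm_sq.fun_div ((hB t ht).fun_pow 2) (pow_ne_zero 2 this)).congr_deriv ?_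
    field_simp
    simp only [Nat.cast_ofNat, Nat.add_one_sub_one, pow_one]
    ring
  have hanti : AntitoneOn (fun t => ‖f t‖ ^ 2 / B t ^ 2) s := by
    refine antitoneOn_of_deriv_nonpos hs
      (fun t ht => (hderiv t ht).continuousAt.continuousWithinAt)
      (fun t ht => (hderiv t (interior_subset ht)).differentiableAt.differentiableWithinAt)
      fun t ht => ?_
    have ht := interior_subset ht
    rw [(hderiv t ht).deriv]
    refine div_nonpos_of_nonpos_of_nonneg ?_ (pow_nonneg (hB0 t ht).le 3)
    have h : inner ℝ (f t) (f' t) * B t ≤ B' t * ‖f t‖ ^ 2 := calc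
      inner ℝ (f t) (f' t) * B t ≤ ‖f t‖ * ‖f' t‖ * B t := by
        have := (hB0 t ht).le
        gcongr
        exact real_inner_le_norm _ _
      _ ≤ ‖f t‖ * (B' t * ‖f t‖) := by
        rw [mul_assoc]
        exact mul_le_mul_of_nonneg_left (hle t ht) (norm_nonneg _)
      _ = B' t * ‖f t‖ ^ 2 := by ring
    linarith
  intro x hx y hy hxy
  have h := hanti hx hy hxy
  simp only [← div_pow] at h
  exact (sq_le_sq₀ (div_nonneg (norm_nonneg _) (hB0 y hy).le)
    (div_nonneg (norm_nonneg _) (hB0 x hx).le)).1 h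

theorem exists_norm_eq_one_norm_mul_eq (z : ℂ) : ∃ ω : ℂ, ‖ω‖ = 1 ∧ ‖z‖ * ω = z :=
  ⟨exp (arg z * I), norm_exp_ofReal_mul_I _, norm_mul_exp_arg_mul_I z⟩

theorem hasDerivAt_comp_ofReal_mul {g : ℂ → ℂ} {ω : ℂ} {t : ℝ}
    (hg : DifferentiableAt ℂ g (t * ω)) :
    HasDerivAt (fun t : ℝ => g (t * ω)) (deriv g (t * ω) * ω) t :=
  (hg.hasDerivAt.comp (t : ℂ) (hasDerivAt_mul_const ω)).comp_ofReal

theorem norm_deriv_le_of_injOn {g : ℂ → ℂ} (hg : DifferentiableOn ℂ g (ball 0 1))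
    (hinj : InjOn g (ball 0 1)) {z : ℂ} (hz : ‖z‖ < 1) :
    ‖deriv g z‖ ≤ ‖deriv g 0‖ * ((1 + ‖z‖) / (1 - ‖z‖) ^ 3) := by
  obtain ⟨ω, hω, hzω⟩ := exists_norm_eq_one_norm_mul_eq z
  have hnorm : ∀ t ∈ Ico (0 : ℝ) 1, ‖(t * ω : ℂ)‖ = t := fun t ht => by
    rw [norm_mul, hω, mul_one, norm_real, Real.norm_of_nonneg ht.1]
  -- `B t = (1 + t) / (1 - t) ^ 3` solves `(1 - t ^ 2) * B' = (4 + 2 * t) * B`, the extremal case of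
  -- `norm_deriv_deriv_le_of_injOn`.
  have hB : ∀ t ∈ Ico (0 : ℝ) 1, HasDerivAt (fun t => (1 + t) / (1 - t) ^ 3)
      ((4 + 2 * t) / (1 - t) ^ 4) t := fun t ht => by
    have ht' : 1 - t ≠ 0 := (sub_pos.2 ht.2).ne'
    refine (((hasDerivAt_id' t).const_add 1).fun_div (((hasDerivAt_id' t).const_sub 1).fun_pow 3)
      (pow_ne_zero 3 ht')).congr_deriv ?_
    field_simp
    ring
  have hB0 : ∀ t ∈ Ico (0 : ℝ) 1, 0 < (1 + t) / (1 - t) ^ 3 := fun t ht =>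
    div_pos (by linarith [ht.1]) (pow_pos (sub_pos.2 ht.2) 3)
  have hg' : ∀ t ∈ Ico (0 : ℝ) 1, HasDerivAt (fun t : ℝ => deriv g (t * ω))
      (deriv (deriv g) (t * ω) * ω) t := fun t ht =>
    hasDerivAt_comp_ofReal_mul ((hg.deriv isOpen_ball).differentiableAt
      (isOpen_ball.mem_nhds (mem_ball_zero_iff.2 ((hnorm t ht).trans_lt ht.2))))
  have hanti : AntitoneOn (fun t : ℝ => ‖deriv g (t * ω)‖ / ((1 + t) / (1 - t) ^ 3)) (Ico 0 1) := by
    refine antitoneOn_norm_div_of_norm_deriv_mul_le (convex_Ico 0 1) hg' hB hB0 fun t ht => ?_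
    have h := norm_deriv_deriv_le_of_injOn hg hinj ((hnorm t ht).trans_lt ht.2)
    rw [hnorm t ht] at h
    have ht' : 0 < 1 - t := sub_pos.2 ht.2
    rw [norm_mul, hω, mul_one, mul_div_assoc', div_mul_eq_mul_div, div_le_div_iff₀ (by positivity)
      (by positivity)]
    nlinarith [mul_le_mul_of_nonneg_left h (pow_pos ht' 3).le]
  have h := hanti ⟨le_rfl, one_pos⟩ ⟨norm_nonneg z, hz⟩ (norm_nonneg z)
  rw [div_le_iff₀ (hB0 _ ⟨norm_nonneg z, hz⟩), hzω] at h
  simpa using h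

theorem norm_sub_le_of_injOn {g : ℂ → ℂ} (hg : DifferentiableOn ℂ g (ball 0 1))
    (hinj : InjOn g (ball 0 1)) {w : ℂ} (hw : ‖w‖ < 1) :
    ‖g w - g 0‖ ≤ ‖deriv g 0‖ * (‖w‖ / (1 - ‖w‖) ^ 2) := by
  obtain ⟨ω, hω, hwω⟩ := exists_norm_eq_one_norm_mul_eq w
  have hnorm : ∀ t ∈ Icc 0 ‖w‖, ‖(t * ω : ℂ)‖ = t := fun t ht => by
    rw [norm_mul, hω, mul_one, norm_real, Real.norm_of_nonneg ht.1]
  have hg' : ∀ t ∈ Icc 0 ‖w‖, HasDerivAt (fun t : ℝ => g (t * ω) - g 0) (deriv g (t * ω) * ω) t :=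
    fun t ht => (hasDerivAt_comp_ofReal_mul (hg.differentiableAt (isOpen_ball.mem_nhds
      (mem_ball_zero_iff.2 ((hnorm t ht).trans_lt (ht.2.trans_lt hw)))))).sub_const (g 0)
  have hB : ∀ t ∈ Icc 0 ‖w‖, HasDerivAt (fun t => ‖deriv g 0‖ * (t / (1 - t) ^ 2))
      (‖deriv g 0‖ * ((1 + t) / (1 - t) ^ 3)) t := fun t ht => by
    have ht' : 1 - t ≠ 0 := (sub_pos.2 (ht.2.trans_lt hw)).ne'
    refine (((hasDerivAt_id' t).fun_div (((hasDerivAt_id' t).const_sub 1).fun_pow 2)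
      (pow_ne_zero 2 ht')).congr_deriv ?_).const_mul _
    field_simp
    ring
  have h := image_norm_le_of_norm_deriv_right_le_deriv_boundary'
    (fun t ht => (hg' t ht).continuousAt.continuousWithinAt)
    (fun t ht => (hg' t (Ico_subset_Icc_self ht)).hasDerivWithinAt) (by simp)
    (fun t ht => (hB t ht).continuousAt.continuousWithinAt)
    (fun t ht => (hB t (Ico_subset_Icc_self ht)).hasDerivWithinAt)
    (fun t ht => by
      have ht := Ico_subset_Icc_self ht
      have h := norm_deriv_le_of_injOn hg hinj ((hnorm t ht).trans_lt (ht.2.trans_lt hw))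
      rw [hnorm t ht] at h
      rwa [norm_mul, hω, mul_one])
    (right_mem_Icc.2 (norm_nonneg w))
  rwa [hwω] at h

/-! ### The Koebe function -/

/-- The rotated Koebe function, univalent on the unit disk for `‖α‖ ≤ 1`; for `‖α‖ = 1` it is
extremal in the growth theorem. -/
noncomputable def koebe (α z : ℂ) : ℂ := z / (1 - α * z) ^ 2

section Koebe

variable {α z : ℂ}

theorem one_sub_mul_ne_zero (hα : ‖α‖ ≤ 1) (hz : ‖z‖ < 1) : 1 - α * z ≠ 0 :=
  (isUnit_one_sub_of_norm_lt_one (norm_mul_lt_one hα hz)).ne_zero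

theorem differentiableOn_koebe (hα : ‖α‖ ≤ 1) : DifferentiableOn ℂ (koebe α) (ball 0 1) :=
  differentiableOn_id.div (by fun_prop) fun _ hz =>
    pow_ne_zero 2 (one_sub_mul_ne_zero hα (mem_ball_zero_iff.1 hz))

theorem hasDerivAt_koebe_zero (α : ℂ) : HasDerivAt (koebe α) 1 0 :=
  ((hasDerivAt_id' 0).fun_div ((((hasDerivAt_id' (0 : ℂ)).const_mul α).const_sub 1).fun_pow 2)
    (by simp)).congr_deriv (by simp)

theorem injOn_koebe (hα : ‖α‖ ≤ 1) : InjOn (koebe α) (ball 0 1) := by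
  rintro x hx y hy (hxy : x / (1 - α * x) ^ 2 = y / (1 - α * y) ^ 2)
  rw [mem_ball_zero_iff] at hx hy
  rw [div_eq_div_iff (pow_ne_zero 2 (one_sub_mul_ne_zero hα hx))
    (pow_ne_zero 2 (one_sub_mul_ne_zero hα hy))] at hxy
  have hne : 1 - α * x * (α * y) ≠ 0 :=
    one_sub_mul_ne_zero (norm_mul_lt_one hα hx).le (norm_mul_lt_one hα hy)
  refine sub_eq_zero.1 ((mul_eq_zero.1 ?_).resolve_right hne)
  linear_combination hxy

theorem norm_koebe_norm_div_self (hz : ‖z‖ < 1) :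
    ‖koebe (‖z‖ / z) z‖ = ‖z‖ / (1 - ‖z‖) ^ 2 := by
  have hcancel : ‖z‖ / z * z = (‖z‖ : ℂ) := div_mul_cancel_of_imp fun h => by simp [h]
  rw [koebe, hcancel, norm_div, norm_pow, ← ofReal_one, ← ofReal_sub, norm_real,
    Real.norm_of_nonneg (sub_pos.2 hz).le]

end Koebe

/-- Upper Pick growth bound for bounded univalent functions. -/
theorem stmt10 (f : ℂ → ℂ) (hd : DifferentiableOn ℂ f (ball (0 : ℂ) 1))
    (hmaps : Set.MapsTo f (ball (0 : ℂ) 1) (ball (0 : ℂ) 1))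
    (hinj : Set.InjOn f (ball (0 : ℂ) 1))
    (h0 : f 0 = 0) (w : ℂ) (hw : w ∈ ball (0 : ℂ) 1) (hw0 : w ≠ 0) :
    ‖f w‖ / (1 - ‖f w‖) ^ 2 ≤ ‖deriv f 0‖ * (‖w‖ / (1 - ‖w‖) ^ 2) := by
  set α : ℂ := ‖f w‖ / f w
  have hα : ‖α‖ ≤ 1 := by
    rw [norm_div, norm_real, norm_norm]
    exact div_self_le_one _
  have hkoebe0 : koebe α (f 0) = 0 := by simp [koebe, h0]
  have hderiv : deriv (koebe α ∘ f) 0 = deriv f 0 := by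
    have hf := (hd.differentiableAt (ball_mem_nhds 0 one_pos)).hasDerivAt
    rw [((hasDerivAt_koebe_zero α).comp_of_eq 0 hf h0.symm).deriv, one_mul]
  have hgrowth := norm_sub_le_of_injOn ((differentiableOn_koebe hα).comp hd hmaps)
    ((injOn_koebe hα).comp hinj hmaps) (mem_ball_zero_iff.1 hw)
  rwa [Function.comp_apply, Function.comp_apply, hkoebe0, sub_zero, hderiv,
    norm_koebe_norm_div_self (mem_ball_zero_iff.1 (hmaps hw))] at hgrowth
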